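/- Let (A,m) be a multiarrangement with a locally heavy hyperplane H_0, and let k ∈ Z be such that H_0 is also locally heavy in (A, m + k·δ_{H_0}) (where δ_{H_0} is the indicator multiplicity of H_0 and m + k·δ_{H_0} is still positive). Then (A,m) is free if and only if (A, m + k·δ_{H_0}) is free. -/

import Mathlib

open scoped Classical
open MvPolynomial

namespace ArrPaper

variable {K : Type*} [Field K] {ℓ : ℕ}

/-- The coordinate ring `S = K[x₁,…,x_ℓ]`. -/
noncomputable abbrev S (K : Type*) [Field K] (ℓ : ℕ) := MvPolynomial (Fin ℓ) K

/-- The linear form associated to a covector `c`. -/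
noncomputable def linForm (c : Fin ℓ → K) : S K ℓ :=
  ∑ i, MvPolynomial.C (c i) * MvPolynomial.X i

/-- The linear functional associated to a covector. -/
noncomputable def toFunc (c : Fin ℓ → K) : (Fin ℓ → K) →ₗ[K] K :=
  ∑ i, c i • LinearMap.proj i

/-- A (central) hyperplane arrangement, given by a finite set of nonzero,
pairwise non-proportional covectors (defining linear forms). -/
structure Arrangement (K : Type*) [Field K] (ℓ : ℕ) where
  hyps : Finset (Fin ℓ → K)
  ne_zero : ∀ c ∈ hyps, c ≠ 0
  nonparallel : ∀ c ∈ hyps, ∀ c' ∈ hyps, c ≠ c' → ∀ t : K, c' ≠ t • c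

/-- Derivations of the polynomial ring `S`. -/
abbrev Der (K : Type*) [Field K] (ℓ : ℕ) := Derivation K (S K ℓ) (S K ℓ)

/-- `θ` is a logarithmic derivation of the multiarrangement `(A, m)`, i.e.
`θ(α_H) ∈ α_H^{m(H)}·S` for all `H ∈ A`. -/
def IsLogDer (A : Arrangement K ℓ) (m : (Fin ℓ → K) → ℕ) (θ : Der K ℓ) : Prop :=
  ∀ c ∈ A.hyps, (linForm c) ^ (m c) ∣ θ (linForm c)

/-- `θ` is homogeneous of polynomial degree `d`: `θ(α)` is homogeneous of degree `d`
for every linear form `α`. -/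
def IsHomogOfDeg (θ : Der K ℓ) (d : ℕ) : Prop :=
  ∀ c : Fin ℓ → K, (θ (linForm c)).IsHomogeneous d

/-- `θ₁, …, θ_ℓ` form a basis of the `S`-module `D(A,m)`. -/
def IsDerBasis (A : Arrangement K ℓ) (m : (Fin ℓ → K) → ℕ) (θ : Fin ℓ → Der K ℓ) : Prop :=
  (∀ i, IsLogDer A m (θ i)) ∧
  ∀ η : Der K ℓ, IsLogDer A m η → ∃! f : Fin ℓ → S K ℓ, η = ∑ i, f i • θ i

/-- `(A,m)` is free with a homogeneous basis of degrees (exponents) `d`. -/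
def IsFreeWithExp (A : Arrangement K ℓ) (m : (Fin ℓ → K) → ℕ) (d : Fin ℓ → ℕ) : Prop :=
  ∃ θ : Fin ℓ → Der K ℓ, (∀ i, IsHomogOfDeg (θ i) (d i)) ∧ IsDerBasis A m θ

/-- `(A,m)` is a free multiarrangement. -/
def IsFree (A : Arrangement K ℓ) (m : (Fin ℓ → K) → ℕ) : Prop :=
  ∃ d : Fin ℓ → ℕ, IsFreeWithExp A m d

/-- `|m|`, the total multiplicity. -/
def msum (A : Arrangement K ℓ) (m : (Fin ℓ → K) → ℕ) : ℕ := ∑ c ∈ A.hyps, m c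

/-- The rank of an arrangement: the dimension of the span of its covectors. -/
noncomputable def rank (A : Arrangement K ℓ) : ℕ :=
  Module.finrank K (Submodule.span K (A.hyps : Set (Fin ℓ → K)))

/-- `A` is reducible: after a linear change of coordinates it is a product of two
arrangements in complementary (nonzero) subspaces.  In terms of covectors: the
covectors split between two complementary nonzero subspaces of the dual space. -/
def Reducible (A : Arrangement K ℓ) : Prop :=
  ∃ W₁ W₂ : Submodule K (Fin ℓ → K), W₁ ≠ ⊥ ∧ W₂ ≠ ⊥ ∧ W₁ ⊓ W₂ = ⊥ ∧ W₁ ⊔ W₂ = ⊤ ∧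
    ∀ c ∈ A.hyps, c ∈ W₁ ∨ c ∈ W₂

/-- The hyperplanes of the localization at a flat; the flat of codimension `r` is
encoded by the `r`-dimensional subspace `U` of the dual space spanned by the
covectors of the hyperplanes containing it. -/
noncomputable def locHyps (A : Arrangement K ℓ) (U : Submodule K (Fin ℓ → K)) :
    Finset (Fin ℓ → K) :=
  A.hyps.filter (· ∈ U)

/-- `U` encodes a flat of `A` of codimension `r` (an element of `L_r(A)`). -/
def IsFlatOfRank (A : Arrangement K ℓ) (U : Submodule K (Fin ℓ → K)) (r : ℕ) : Prop :=
  Module.finrank K U = r ∧ Submodule.span K (locHyps A U : Set (Fin ℓ → K)) = U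

/-- The localization `A_X` of `A` at the flat encoded by `U`. -/
noncomputable def localize (A : Arrangement K ℓ) (U : Submodule K (Fin ℓ → K)) :
    Arrangement K ℓ where
  hyps := locHyps A U
  ne_zero := fun c hc => A.ne_zero c (Finset.mem_filter.mp hc).1
  nonparallel := fun c hc c' hc' =>
    A.nonparallel c (Finset.mem_filter.mp hc).1 c' (Finset.mem_filter.mp hc').1

/-- `H₀` (given by covector `c₀`) is a heavy hyperplane of `(A,m)`. -/
def IsHeavy (A : Arrangement K ℓ) (m : (Fin ℓ → K) → ℕ) (c₀ : Fin ℓ → K) : Prop :=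
  c₀ ∈ A.hyps ∧ (∑ c ∈ A.hyps.erase c₀, m c) ≤ m c₀

/-- `H₀` (given by covector `c₀`) is a locally heavy hyperplane of `(A,m)`. -/
def IsLocallyHeavy (A : Arrangement K ℓ) (m : (Fin ℓ → K) → ℕ) (c₀ : Fin ℓ → K) : Prop :=
  c₀ ∈ A.hyps ∧ ∀ U : Submodule K (Fin ℓ → K), IsFlatOfRank A U 2 → c₀ ∈ U →
    3 ≤ (locHyps A U).card → (∑ c ∈ (locHyps A U).erase c₀, m c) ≤ m c₀

/-- `b` is the second Betti number of the rank-2 localization of `(A,m)` at `U`: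
the product of the nonzero exponents of this free rank-2 multiarrangement. -/
def IsLocalB2 (A : Arrangement K ℓ) (m : (Fin ℓ → K) → ℕ)
    (U : Submodule K (Fin ℓ → K)) (b : ℕ) : Prop :=
  ∃ d : Fin ℓ → ℕ, IsFreeWithExp (localize A U) m d ∧
    b = ∏ i ∈ Finset.univ.filter (fun i => d i ≠ 0), d i

/-- `b` is the second Betti number `b₂(A,m)` of the multiarrangement `(A,m)`. -/
def IsB2 (A : Arrangement K ℓ) (m : (Fin ℓ → K) → ℕ) (b : ℕ) : Prop :=
  ∃ bloc : Submodule K (Fin ℓ → K) → ℕ,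
    (∀ U, IsFlatOfRank A U 2 → IsLocalB2 A m U (bloc U)) ∧
    b = ∑ᶠ U ∈ {U : Submodule K (Fin ℓ → K) | IsFlatOfRank A U 2}, bloc U

/-- The second Betti number of a simple arrangement:
`b₂(A) = Σ_{X ∈ L₂(A)} (|A_X| - 1)`. -/
noncomputable def b2Simple (A : Arrangement K ℓ) : ℕ :=
  ∑ᶠ U ∈ {U : Submodule K (Fin ℓ → K) | IsFlatOfRank A U 2}, ((locHyps A U).card - 1)

/-- The Euler–Ziegler multiplicity of the restricted hyperplane `H₀ ∩ ker(c)` of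
`A^{H₀}`: `m^{H₀}(X) = |m_X| - m(H₀)`. -/
noncomputable def EZmult (A : Arrangement K ℓ) (m : (Fin ℓ → K) → ℕ)
    (c₀ c : Fin ℓ → K) : ℕ :=
  (∑ c' ∈ A.hyps.filter (· ∈ Submodule.span K ({c₀, c} : Set (Fin ℓ → K))), m c') - m c₀

/-- Two covectors are parallel (define the same hyperplane). -/
def Parallel {n : ℕ} (b b' : Fin n → K) : Prop := ∃ t : K, t ≠ 0 ∧ b' = t • b

/-- The covector on `K^n` obtained by restricting the covector `c` on `K^{n+1}` to the
hyperplane `ker c₀`, transported by the linear isomorphism `e : ker c₀ ≃ K^n`. -/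
noncomputable def resCov {n : ℕ} (c₀ : Fin (n+1) → K)
    (e : ↥(LinearMap.ker (toFunc c₀)) ≃ₗ[K] (Fin n → K)) (c : Fin (n+1) → K) :
    Fin n → K :=
  fun j => toFunc c ((e.symm (Pi.single j 1) : ↥(LinearMap.ker (toFunc c₀))) : Fin (n+1) → K)

/-- `(B, mB)` is (a model, in coordinates, of) the Euler–Ziegler restriction
`(A^{H₀}, m^{H₀})` of `(A,m)` to the hyperplane `H₀ = ker c₀ ∈ A`. -/
def IsEZRes {n : ℕ} (A : Arrangement K (n+1)) (m : (Fin (n+1) → K) → ℕ)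
    (c₀ : Fin (n+1) → K) (B : Arrangement K n) (mB : (Fin n → K) → ℕ) : Prop :=
  c₀ ∈ A.hyps ∧
  ∃ e : ↥(LinearMap.ker (toFunc c₀)) ≃ₗ[K] (Fin n → K),
    (∀ c ∈ A.hyps.erase c₀, ∃ b ∈ B.hyps,
        Parallel b (resCov c₀ e c) ∧ mB b = EZmult A m c₀ c) ∧
    (∀ b ∈ B.hyps, ∃ c ∈ A.hyps.erase c₀, Parallel b (resCov c₀ e c))

/-- A combinatorial equivalence between two arrangements: a bijection between the
hyperplanes inducing an isomorphism of intersection lattices (it preserves the rank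
of every subset of hyperplanes). -/
def CombEquiv (A A' : Arrangement K ℓ) : Prop :=
  ∃ φ : (Fin ℓ → K) → (Fin ℓ → K), Set.BijOn φ ↑A.hyps ↑A'.hyps ∧
    ∀ T : Finset (Fin ℓ → K), T ⊆ A.hyps →
      Module.finrank K (Submodule.span K (T : Set (Fin ℓ → K))) =
      Module.finrank K (Submodule.span K ((T.image φ) : Set (Fin ℓ → K)))

/-! ### Linear forms -/

lemma linForm_add (c c' : Fin ℓ → K) : linForm (c + c') = linForm c + linForm c' := by
  simp [linForm, add_mul, Finset.sum_add_distrib]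

lemma linForm_smul (t : K) (c : Fin ℓ → K) : linForm (t • c) = C t * linForm c := by
  simp [linForm, Finset.mul_sum, mul_assoc]

lemma linForm_zero : linForm (0 : Fin ℓ → K) = 0 := by
  simp [linForm]

lemma linForm_single (i : Fin ℓ) : linForm (Pi.single i (1 : K)) = X i := by
  rw [linForm, Finset.sum_eq_single i]
  · simp
  · intro j _ hj
    simp [hj]
  · simp

lemma coeff_linForm (c : Fin ℓ → K) (i : Fin ℓ) :
    coeff (Finsupp.single i 1) (linForm c) = c i := by
  rw [linForm, coeff_sum, Finset.sum_eq_single i]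
  · simp
  · intro j _ hj
    rw [coeff_C_mul, coeff_X, if_neg, mul_zero]
    rwa [Finsupp.single_left_inj one_ne_zero]
  · simp

lemma linForm_injective : Function.Injective (linForm : (Fin ℓ → K) → S K ℓ) := by
  intro c c' h
  ext i
  rw [← coeff_linForm c, h, coeff_linForm]

lemma linForm_ne_zero {c : Fin ℓ → K} (hc : c ≠ 0) : linForm c ≠ 0 := by
  rw [← linForm_zero]
  exact fun h => hc (linForm_injective h)

lemma isHomogeneous_linForm (c : Fin ℓ → K) : (linForm c).IsHomogeneous 1 :=
  IsHomogeneous.sum _ _ _ fun i _ => by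
    simpa using (isHomogeneous_C (Fin ℓ) (c i)).mul (isHomogeneous_X K i)

lemma prime_linForm {c : Fin ℓ → K} (hc : c ≠ 0) : Prime (linForm c) := by
  refine Irreducible.prime (irreducible_of_totalDegree_eq_one
    ((isHomogeneous_linForm c).totalDegree (linForm_ne_zero hc)) fun x hx => ?_)
  obtain ⟨i, hi⟩ := Function.ne_iff.mp hc
  refine isUnit_iff_ne_zero.mpr fun h => hi ?_
  have := hx (Finsupp.single i 1)
  rwa [coeff_linForm, h, zero_dvd_iff] at this

lemma exists_eq_smul_of_linForm_dvd {c c' : Fin ℓ → K} (hc : c ≠ 0)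
    (h : linForm c ∣ linForm c') : ∃ t : K, c' = t • c := by
  by_cases hc' : c' = 0
  · exact ⟨0, by simp [hc']⟩
  obtain ⟨q, hq⟩ := h
  have hq0 : q ≠ 0 := by
    rintro rfl
    exact linForm_ne_zero hc' (by simpa using hq)
  have hdeg := congrArg totalDegree hq
  rw [totalDegree_mul_of_isDomain (linForm_ne_zero hc) hq0,
    (isHomogeneous_linForm c).totalDegree (linForm_ne_zero hc),
    (isHomogeneous_linForm c').totalDegree (linForm_ne_zero hc')] at hdeg
  have hqC := totalDegree_eq_zero_iff_eq_C.mp (show q.totalDegree = 0 by omega)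
  refine ⟨q.coeff 0, linForm_injective ?_⟩
  rw [linForm_smul, hq, mul_comm, ← hqC]

lemma algHom_linForm {B : Type*} [CommRing B] [Algebra K B] (f : S K ℓ →ₐ[K] B)
    (c : Fin ℓ → K) : f (linForm c) = ∑ i, algebraMap K B (c i) * f (X i) := by
  rw [linForm, map_sum]
  refine Finset.sum_congr rfl fun i _ => ?_
  rw [map_mul, ← algebraMap_eq, f.commutes]

lemma linForm_sum {ι : Type*} (s : Finset ι) (t : ι → K) (c : ι → Fin ℓ → K) :
    linForm (∑ i ∈ s, t i • c i) = ∑ i ∈ s, C (t i) * linForm (c i) := by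
  induction s using Finset.induction_on with
  | empty => simp [linForm_zero]
  | insert i s hi ih => rw [Finset.sum_insert hi, Finset.sum_insert hi, linForm_add,
      linForm_smul, ih]

/-! ### Homogeneous components of products -/

lemma homogeneousComponent_mul_of_isHomogeneous {σ R : Type*} [CommRing R]
    {a : MvPolynomial σ R} {i : ℕ} (ha : a.IsHomogeneous i) (b : MvPolynomial σ R) (n : ℕ) :
    homogeneousComponent n (a * b) = if i ≤ n then a * homogeneousComponent (n - i) b else 0 := by
  let := MvPolynomial.gradedAlgebra (σ := σ) (R := R)
  rw [← decomposition.decompose'_apply, ← decomposition.decompose'_apply]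
  exact DirectSum.coe_decompose_mul_of_left_mem (homogeneousSubmodule σ R) n
    ((mem_homogeneousSubmodule i a).mpr ha)

lemma dvd_homogeneousComponent {σ R : Type*} [CommRing R]
    {a b : MvPolynomial σ R} {i : ℕ} (ha : a.IsHomogeneous i) (h : a ∣ b) (n : ℕ) :
    a ∣ homogeneousComponent n b := by
  obtain ⟨q, rfl⟩ := h
  rw [homogeneousComponent_mul_of_isHomogeneous ha]
  split_ifs
  · exact dvd_mul_right _ _
  · exact dvd_zero _

lemma isHomogeneous_of_mul_left {σ R : Type*} [CommRing R] [IsDomain R]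
    {a f : MvPolynomial σ R} {i d : ℕ} (ha : a.IsHomogeneous i) (ha0 : a ≠ 0) (hf : f ≠ 0)
    (h : (a * f).IsHomogeneous d) : i ≤ d ∧ f.IsHomogeneous (d - i) := by
  have h1 := homogeneousComponent_eq_self h
  rw [homogeneousComponent_mul_of_isHomogeneous ha] at h1
  split_ifs at h1 with hid
  · refine ⟨hid, ?_⟩
    rw [← mul_left_cancel₀ ha0 h1]
    exact homogeneousComponent_isHomogeneous _ _
  · exact absurd h1.symm (mul_ne_zero ha0 hf)

/-! ### Divisibility by products of prime powers -/

lemma isRelPrime_pow_pow {R : Type*} [CommRing R] [IsDomain R] [UniqueFactorizationMonoid R]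
    {p q : R} (hp : Prime p) (hq : Prime q) (h : ¬ Associated p q) (a b : ℕ) :
    IsRelPrime (p ^ a) (q ^ b) :=
  ((hp.irreducible.isRelPrime_iff_not_dvd.mpr
    fun hd => h (hp.associated_of_dvd hq hd)).pow_left).pow_right

lemma dvd_prod_pow_of_forall_dvd {R ι : Type*} [DecidableEq ι] [CommRing R] [IsDomain R]
    [UniqueFactorizationMonoid R] {s : Finset ι} (hs : s.Nonempty) {p : ι → R}
    (hp : ∀ i ∈ s, Prime (p i)) (hpp : ∀ i ∈ s, ∀ j ∈ s, i ≠ j → ¬ Associated (p i) (p j))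
    {m : ι → ℕ} {N : ℕ} {D : R}
    (hD : ∀ i ∈ s, D ∣ p i ^ m i * (∏ j ∈ s.erase i, p j ^ m j) ^ N) :
    D ∣ ∏ i ∈ s, p i ^ m i := by
  have hne : ∀ i ∈ s, p i ^ m i * (∏ j ∈ s.erase i, p j ^ m j) ^ N ≠ 0 := fun i hi =>
    mul_ne_zero (pow_ne_zero _ (hp i hi).ne_zero) (pow_ne_zero _ (Finset.prod_ne_zero_iff.mpr
      fun j hj => pow_ne_zero _ (hp j (Finset.mem_of_mem_erase hj)).ne_zero))
  have hD0 : D ≠ 0 := by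
    rintro rfl
    obtain ⟨i, hi⟩ := hs
    exact hne i hi (zero_dvd_iff.mp (hD i hi))
  rw [UniqueFactorizationMonoid.dvd_iff_emultiplicity_le hD0]
  intro q hq
  by_cases hqs : ∃ i ∈ s, q ∣ p i
  · obtain ⟨i, hi, hqi⟩ := hqs
    have hcop : ¬ q ∣ (∏ j ∈ s.erase i, p j ^ m j) ^ N := by
      intro h
      obtain ⟨j, hj, hqj⟩ := (hq.dvd_finsetProd_iff _).mp (hq.dvd_of_dvd_pow h)
      have hj' := Finset.mem_erase.mp hj
      exact hpp i hi j hj'.2 (Ne.symm hj'.1) ((hq.associated_of_dvd (hp i hi) hqi).symm.trans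
        (hq.associated_of_dvd (hp j hj'.2) (hq.dvd_of_dvd_pow hqj)))
    calc emultiplicity q D
        ≤ emultiplicity q (p i ^ m i * (∏ j ∈ s.erase i, p j ^ m j) ^ N) :=
          emultiplicity_le_emultiplicity_of_dvd_right (hD i hi)
      _ = emultiplicity q (p i ^ m i) := by
          rw [emultiplicity_mul hq, emultiplicity_eq_zero.mpr hcop, add_zero]
      _ ≤ _ := emultiplicity_le_emultiplicity_of_dvd_right
          (Finset.dvd_prod_of_mem (fun i => p i ^ m i) hi)
  · rw [emultiplicity_eq_zero.mpr]
    · exact zero_le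
    · intro hqD
      push Not at hqs
      obtain ⟨i, hi⟩ := hs
      rcases hq.dvd_or_dvd (hqD.trans (hD i hi)) with h | h
      · exact hqs i hi (hq.dvd_of_dvd_pow h)
      · obtain ⟨j, hj, hqj⟩ := (hq.dvd_finsetProd_iff _).mp (hq.dvd_of_dvd_pow h)
        exact hqs j (Finset.mem_of_mem_erase hj) (hq.dvd_of_dvd_pow hqj)

lemma prod_pow_dvd_of_forall_associated {R ι : Type*} [CommRing R] [IsDomain R]
    [UniqueFactorizationMonoid R] {s : Finset ι} {p : ι → R}
    (hp : ∀ i ∈ s, Prime (p i)) {m : ι → ℕ} {D : R}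
    (hD : ∀ i ∈ s, ∏ j ∈ s with Associated (p i) (p j), p j ^ m j ∣ D) :
    ∏ i ∈ s, p i ^ m i ∣ D := by
  rw [← Finset.prod_fiberwise_of_maps_to (g := fun i => Associates.mk (p i))
    (fun i hi => Finset.mem_image_of_mem (fun i => Associates.mk (p i)) hi)]
  refine Finset.prod_dvd_of_isRelPrime ?_ ?_
  · intro a _ b _ hab
    refine IsRelPrime.prod_left fun i hi => IsRelPrime.prod_right fun j hj => ?_
    rw [Finset.mem_filter] at hi hj
    refine isRelPrime_pow_pow (hp i hi.1) (hp j hj.1) (fun h => hab ?_) _ _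
    rw [← hi.2, ← hj.2]
    exact Associates.mk_eq_mk_iff_associated.mpr h
  · intro a ha
    obtain ⟨i, hi, rfl⟩ := Finset.mem_image.mp ha
    convert hD i hi using 2
    ext j
    simp [Associates.mk_eq_mk_iff_associated, Associated.comm]

/-! ### Interpolation by binary forms -/

lemma homogenize_X_add_C_pow (a : K) (m : ℕ) :
    ((Polynomial.X + Polynomial.C a) ^ m).homogenize m = (X 0 + C a * X 1) ^ m := by
  induction m with
  | zero => simp
  | succ m ih =>
    rw [pow_succ, Polynomial.homogenize_mul _ _ ?_ ?_, ih, pow_succ]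
    · simp [Polynomial.homogenize_X one_ne_zero]
    · simp
    · simp

/-- In the binary forms in `x`, `y` of degree `n ≥ ∑ mᵢ`, one can interpolate the values
`-aᵢ xⁿ` modulo `(y + aᵢ x) ^ mᵢ` by a form that is divisible by `x`. -/
lemma exists_dvd_interpolation {R ι : Type*} [CommRing R] [Algebra K R] (s : Finset ι)
    {a : ι → K} (ha : Set.InjOn a s) (m : ι → ℕ) {n : ℕ} (hn : ∑ i ∈ s, m i ≤ n) (x y : R) :
    ∃ g : R, x ∣ g ∧ ∀ i ∈ s,
      (y + algebraMap K R (a i) * x) ^ m i ∣ g + algebraMap K R (a i) * x ^ n := by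
  let l : s → Polynomial K := fun i => (Polynomial.X + Polynomial.C (a i)) ^ m i
  have hcop : Pairwise (Function.onFun IsCoprime fun i => Ideal.span {l i}) := by
    intro i j hij
    refine (Ideal.isCoprime_span_singleton_iff _ _).mpr (IsCoprime.pow ?_)
    have hinj : Function.Injective fun i : s => -a i := fun i j h =>
      Subtype.ext (ha i.2 j.2 (neg_injective h))
    simpa [Function.onFun, sub_neg_eq_add] using Polynomial.pairwise_coprime_X_sub_C hinj hij
  obtain ⟨G₀, hG₀⟩ := Ideal.exists_forall_sub_mem_ideal hcop fun i => Polynomial.C (-a i)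
  let M : Polynomial K := ∏ i : s, l i
  have hM : M.Monic := Polynomial.monic_prod_of_monic _ _ fun i _ =>
    (Polynomial.monic_X_add_C _).pow _
  have hMdeg : M.natDegree = ∑ i ∈ s, m i := by
    rw [Polynomial.natDegree_prod_of_monic _ _ fun i _ => (Polynomial.monic_X_add_C _).pow _,
      ← Finset.sum_coe_sort s]
    simp
  let G := G₀ %ₘ M
  have hG : ∀ i (hi : i ∈ s), (Polynomial.X + Polynomial.C (a i)) ^ m i ∣
      G + Polynomial.C (a i) := by
    intro i hi
    have h1 : l ⟨i, hi⟩ ∣ G₀ + Polynomial.C (a i) := by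
      simpa using Ideal.mem_span_singleton.mp (hG₀ ⟨i, hi⟩)
    have h2 : l ⟨i, hi⟩ ∣ M := Finset.dvd_prod_of_mem l (Finset.mem_univ _)
    have h3 : G + Polynomial.C (a i) = G₀ + Polynomial.C (a i) - M * (G₀ /ₘ M) := by
      linear_combination Polynomial.modByMonic_add_div G₀ M
    rw [h3]
    exact dvd_sub h1 (h2.mul_right _)
  have hGdeg : G = 0 ∨ G.natDegree < n := by
    by_cases hM1 : M = 1
    · left
      simp [G, hM1]
    · right
      exact (Polynomial.natDegree_modByMonic_lt _ hM hM1).trans_le (hMdeg.trans_le hn)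
  have hGn : G.natDegree ≤ n := by
    rcases hGdeg with h | h
    · simp [h]
    · exact h.le
  let φ : MvPolynomial (Fin 2) K →ₐ[K] R := aeval ![y, x]
  refine ⟨φ (G.homogenize n), ?_, fun i hi => ?_⟩
  · rcases hGdeg with h | h
    · simp [h]
    · obtain ⟨n, rfl⟩ : ∃ n', n = n' + 1 := ⟨n - 1, by omega⟩
      have := Polynomial.homogenize_mul G 1 (m := n) (n := 1) (by omega) (by simp)
      rw [mul_one] at this
      rw [this, map_mul]
      simp [φ]
  · obtain ⟨q, hq⟩ := hG i hi
    have h1 : φ ((G + Polynomial.C (a i)).homogenize n) =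
        φ (G.homogenize n) + algebraMap K R (a i) * x ^ n := by
      simp [φ, Polynomial.homogenize_add]
    rw [← h1, hq]
    by_cases hq0 : q = 0
    · simp [hq0]
    have hdeg := congrArg Polynomial.natDegree hq
    rw [((Polynomial.monic_X_add_C (a i)).pow _).natDegree_mul' hq0,
      Polynomial.natDegree_pow, Polynomial.natDegree_X_add_C] at hdeg
    have hle : (G + Polynomial.C (a i)).natDegree ≤ n := by
      rwa [Polynomial.natDegree_add_C]
    have hmn : m i + (n - m i) = n := by omega
    have := Polynomial.homogenize_mul ((Polynomial.X + Polynomial.C (a i)) ^ m i) q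
      (m := m i) (n := n - m i) (by simp) (by omega)
    rw [hmn] at this
    rw [this, map_mul, homogenize_X_add_C_pow]
    simp [φ]

/-! ### Restriction to a locally heavy hyperplane -/

lemma Arrangement.isRelPrime_linForm_pow (A : Arrangement K ℓ) {c c' : Fin ℓ → K}
    (hc : c ∈ A.hyps) (hc' : c' ∈ A.hyps) (h : c ≠ c') (a b : ℕ) :
    IsRelPrime (linForm c ^ a) (linForm c' ^ b) := by
  refine isRelPrime_pow_pow (prime_linForm (A.ne_zero c hc)) (prime_linForm (A.ne_zero c' hc'))
    (fun hass => ?_) a b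
  obtain ⟨t, ht⟩ := exists_eq_smul_of_linForm_dvd (A.ne_zero c hc) hass.dvd
  exact A.nonparallel c hc c' hc' h t ht

lemma Arrangement.isFlatOfRank_span_pair (A : Arrangement K ℓ) {c₀ c : Fin ℓ → K}
    (hc₀ : c₀ ∈ A.hyps) (hc : c ∈ A.hyps) (h : c₀ ≠ c) :
    IsFlatOfRank A (Submodule.span K {c₀, c}) 2 := by
  constructor
  · have hli : LinearIndependent K ![c₀, c] := by
      rw [LinearIndependent.pair_iff' (A.ne_zero c₀ hc₀)]
      exact fun t ht => A.nonparallel c₀ hc₀ c hc h t ht.symm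
    have := finrank_span_eq_card hli
    rwa [Matrix.range_cons_cons_empty, Fintype.card_fin] at this
  · refine le_antisymm (Submodule.span_le.mpr fun x hx => ?_) (Submodule.span_mono ?_)
    · exact (Finset.mem_filter.mp hx).2
    · intro x hx
      refine Finset.mem_coe.mpr (Finset.mem_filter.mpr ⟨?_, Submodule.subset_span hx⟩)
      rcases hx with rfl | rfl
      · exact hc₀
      · exact hc

/-- The hyperplanes other than `c₀` with the same trace on `c₀` as `c`. -/
noncomputable def sameTrace (A : Arrangement K ℓ) (c₀ c : Fin ℓ → K) : Finset (Fin ℓ → K) :=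
  (A.hyps.erase c₀).filter (· ∈ Submodule.span K {c₀, c})

lemma erase_locHyps_span_pair (A : Arrangement K ℓ) (c₀ c : Fin ℓ → K) :
    (locHyps A (Submodule.span K {c₀, c})).erase c₀ = sameTrace A c₀ c := by
  ext x
  simp only [locHyps, sameTrace, Finset.mem_erase, Finset.mem_filter]
  tauto

/-- Logarithmic derivations restrict to logarithmic derivations of the Euler–Ziegler restriction
to a locally heavy hyperplane. -/
lemma IsLocallyHeavy.exists_apply_linForm_eq {A : Arrangement K ℓ} {m : (Fin ℓ → K) → ℕ}
    {c₀ : Fin ℓ → K} (h : IsLocallyHeavy A m c₀) {θ : Der K ℓ} (hθ : IsLogDer A m θ)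
    {c : Fin ℓ → K} (hc : c ∈ A.hyps) (hcc : c ≠ c₀) :
    ∃ a b, θ (linForm c) =
      (∏ c' ∈ sameTrace A c₀ c, linForm c' ^ m c') * a + linForm c₀ * b := by
  have hc₀ := h.1
  have hcT : c ∈ sameTrace A c₀ c := Finset.mem_filter.mpr
    ⟨Finset.mem_erase.mpr ⟨hcc, hc⟩, Submodule.subset_span (by simp)⟩
  by_cases hcard : (sameTrace A c₀ c).card ≤ 1
  · have hT : sameTrace A c₀ c = {c} := (Finset.eq_singleton_iff_unique_mem).mpr
      ⟨hcT, fun x hx => Finset.card_le_one.mp hcard _ hx _ hcT⟩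
    obtain ⟨q, hq⟩ := hθ c hc
    exact ⟨q, 0, by rw [hT, Finset.prod_singleton, hq, mul_zero, add_zero]⟩
  have hheavy : ∑ c' ∈ sameTrace A c₀ c, m c' ≤ m c₀ := by
    rw [← erase_locHyps_span_pair]
    refine h.2 _ (A.isFlatOfRank_span_pair hc₀ hc hcc.symm) (Submodule.subset_span (by simp)) ?_
    have hmem : c₀ ∈ locHyps A (Submodule.span K {c₀, c}) :=
      Finset.mem_filter.mpr ⟨hc₀, Submodule.subset_span (by simp)⟩
    have := Finset.card_erase_add_one hmem
    rw [erase_locHyps_span_pair] at this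
    omega
  have hpar : ∀ c' ∈ sameTrace A c₀ c, ∃ a s : K, s ≠ 0 ∧ c' = s • (c + a • c₀) := by
    intro c' hc'
    obtain ⟨hc'1, hc'2⟩ := Finset.mem_filter.mp hc'
    obtain ⟨hc'0, hc'A⟩ := Finset.mem_erase.mp hc'1
    obtain ⟨t, s, hts⟩ := Submodule.mem_span_pair.mp hc'2
    have hs : s ≠ 0 := by
      rintro rfl
      exact A.nonparallel c₀ hc₀ c' hc'A hc'0.symm t (by rw [← hts]; simp)
    refine ⟨s⁻¹ * t, s, hs, ?_⟩
    rw [smul_add, smul_smul, mul_inv_cancel_left₀ hs, ← hts, add_comm]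
  choose! a s hs hcs using hpar
  have hmemA : ∀ c' ∈ sameTrace A c₀ c, c' ∈ A.hyps := fun c' hc' =>
    Finset.mem_of_mem_erase (Finset.mem_filter.mp hc').1
  have ha : Set.InjOn a (sameTrace A c₀ c) := by
    intro x hx y hy hxy
    by_contra hne
    refine A.nonparallel x (hmemA x hx) y (hmemA y hy) hne (s y * (s x)⁻¹) ?_
    have h1 := hcs x hx
    have h2 := hcs y hy
    rw [mul_smul]
    nth_rw 2 [h1]
    rw [inv_smul_smul₀ (hs x hx), hxy, ← h2]
  obtain ⟨f, hf⟩ := hθ c₀ hc₀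
  obtain ⟨g, ⟨g', hg'⟩, hg⟩ := exists_dvd_interpolation (sameTrace A c₀ c) ha m hheavy
    (linForm c₀) (linForm c)
  have hdvd : ∏ c' ∈ sameTrace A c₀ c, linForm c' ^ m c' ∣ θ (linForm c) - g * f := by
    refine Finset.prod_dvd_of_isRelPrime (fun x hx y hy hxy =>
      A.isRelPrime_linForm_pow (hmemA x hx) (hmemA y hy) hxy _ _) fun c' hc' => ?_
    have hlin : linForm c' = C (s c') * (linForm c + C (a c') * linForm c₀) := by
      conv_lhs => rw [hcs c' hc']
      rw [linForm_smul, linForm_add, linForm_smul]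
    have hunit : IsUnit (C (s c') : S K ℓ) := (isUnit_iff_ne_zero.mpr (hs c' hc')).map C
    have h1 := hθ c' (hmemA c' hc')
    have h2 : θ (linForm c') = C (s c') * (θ (linForm c) + C (a c') * (linForm c₀ ^ m c₀ * f)) := by
      rw [hlin, ← smul_eq_C_mul, ← smul_eq_C_mul, Derivation.map_smul, map_add,
        Derivation.map_smul, hf, smul_eq_C_mul, smul_eq_C_mul]
    rw [h2, hunit.dvd_mul_left] at h1
    have h3 : linForm c' ^ m c' ∣ g + C (a c') * linForm c₀ ^ m c₀ := by
      rw [hlin, mul_pow, (hunit.pow _).mul_left_dvd]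
      exact hg c' hc'
    have h4 := dvd_sub h1 (h3.mul_right f)
    convert h4 using 1
    ring
  obtain ⟨q, hq⟩ := hdvd
  exact ⟨q, g' * f, by rw [← mul_assoc, ← hg', ← hq]; ring⟩

/-! ### Derivations and their coefficient matrices -/

lemma der_linForm (θ : Der K ℓ) (c : Fin ℓ → K) :
    θ (linForm c) = ∑ i, C (c i) * θ (X i) := by
  rw [linForm, map_sum]
  refine Finset.sum_congr rfl fun i _ => ?_
  rw [← smul_eq_C_mul, Derivation.map_smul, smul_eq_C_mul]

lemma der_linForm_smul (θ : Der K ℓ) (t : K) (c : Fin ℓ → K) :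
    θ (linForm (t • c)) = C t * θ (linForm c) := by
  rw [linForm_smul, ← smul_eq_C_mul, Derivation.map_smul, smul_eq_C_mul]

lemma der_linForm_sum {ι : Type*} (s : Finset ι) (θ : Der K ℓ) (t : ι → K) (c : ι → Fin ℓ → K) :
    θ (linForm (∑ i ∈ s, t i • c i)) = ∑ i ∈ s, C (t i) * θ (linForm (c i)) := by
  rw [linForm_sum, map_sum]
  refine Finset.sum_congr rfl fun i _ => ?_
  rw [← linForm_smul, der_linForm_smul]

lemma der_sum_smul_apply {ι : Type*} (s : Finset ι) (f : ι → S K ℓ) (θ : ι → Der K ℓ)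
    (x : S K ℓ) : (∑ i ∈ s, f i • θ i) x = ∑ i ∈ s, f i * θ i x := by
  induction s using Finset.induction_on with
  | empty => simp
  | insert i s hi ih =>
    rw [Finset.sum_insert hi, Finset.sum_insert hi, Derivation.add_apply, ih,
      Derivation.smul_apply, smul_eq_mul]

lemma exists_invertible_row {n : ℕ} {c : Fin (n + 1) → K} (hc : c ≠ 0) :
    ∃ P P' : Matrix (Fin (n + 1)) (Fin (n + 1)) K, P 0 = c ∧ P * P' = 1 ∧ P' * P = 1 := by
  obtain ⟨k, hk⟩ := Function.ne_iff.mp hc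
  obtain ⟨e, he⟩ : ∃ e : Fin (n + 1) ≃ Fin (n + 1), e 0 = k := ⟨Equiv.swap 0 k, by simp⟩
  let P₁ : Matrix (Fin (n + 1)) (Fin (n + 1)) K :=
    Matrix.updateRow (1 : Matrix (Fin (n + 1)) (Fin (n + 1)) K) k c
  have hdet : P₁.det = c k := by
    have h1 : c = ∑ i, c i • (1 : Matrix (Fin (n + 1)) (Fin (n + 1)) K) i := by
      ext j
      simp [Finset.sum_apply, Matrix.one_apply]
    have h2 := Matrix.det_updateRow_sum (1 : Matrix (Fin (n + 1)) (Fin (n + 1)) K) k c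
    rw [← h1] at h2
    simpa using h2
  let P := P₁.submatrix e id
  have hP : IsUnit P.det := by
    have : P.det = Equiv.Perm.sign e * P₁.det := Matrix.det_permute e P₁
    rw [this, hdet]
    refine IsUnit.mul ?_ (isUnit_iff_ne_zero.mpr hk)
    exact (Units.isUnit (Equiv.Perm.sign e)).map (Int.castRingHom K)
  refine ⟨P, P⁻¹, ?_, Matrix.mul_nonsing_inv P hP, Matrix.nonsing_inv_mul P hP⟩
  ext j
  simp [P, P₁, he]

/-- The product of the defining forms, with multiplicities. -/
noncomputable def definingPoly (s : Finset (Fin ℓ → K)) (m : (Fin ℓ → K) → ℕ) : S K ℓ :=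
  ∏ c ∈ s, linForm c ^ m c

lemma IsDerBasis.det_dvd_det {n : ℕ} {A : Arrangement K n} {m : (Fin n → K) → ℕ}
    {θ η : Fin n → Der K n} (h : IsDerBasis A m θ) (hη : ∀ j, IsLogDer A m (η j)) :
    (Matrix.of fun i j => θ i (X j)).det ∣ (Matrix.of fun i j => η i (X j)).det := by
  choose F hF _ using fun j => h.2 (η j) (hη j)
  have hmat : Matrix.of (fun i j => η i (X j)) =
      Matrix.of F * Matrix.of fun i j => θ i (X j) := by
    ext1 i j
    have := congrArg (fun d : Der K n => d (X j)) (hF i)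
    simpa only [Matrix.mul_apply, Matrix.of_apply, der_sum_smul_apply] using this
  rw [hmat, Matrix.det_mul]
  exact dvd_mul_left _ _

lemma det_map_C_isUnit {n : ℕ} {U P : Matrix (Fin n) (Fin n) K} (h : P * U = 1) :
    IsUnit (U.map C : Matrix (Fin n) (Fin n) (S K ℓ)).det := by
  have h1 : (U.map C : Matrix (Fin n) (Fin n) (S K ℓ)).det = C U.det :=
    (RingHom.map_det C U).symm
  rw [h1]
  refine IsUnit.map C ?_
  have hd := congrArg Matrix.det h
  rw [Matrix.det_mul, Matrix.det_one, mul_comm] at hd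
  exact IsUnit.of_mul_eq_one _ hd

lemma exists_isLogDer_det_dvd {n : ℕ} (A : Arrangement K (n + 1)) (m : (Fin (n + 1) → K) → ℕ)
    {c : Fin (n + 1) → K} (hc : c ∈ A.hyps) :
    ∃ η : Fin (n + 1) → Der K (n + 1), (∀ j, IsLogDer A m (η j)) ∧
      (Matrix.of fun i j => η i (X j)).det ∣
        linForm c ^ m c * definingPoly (A.hyps.erase c) m ^ (n + 1) := by
  obtain ⟨P, U, hP0, hPU, -⟩ := exists_invertible_row (A.ne_zero c hc)
  let q : Fin (n + 1) → S K (n + 1) :=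
    Fin.cons (definingPoly A.hyps m) fun _ => definingPoly (A.hyps.erase c) m
  let η : Fin (n + 1) → Der K (n + 1) := fun j =>
    mkDerivation K fun k => q j * C (U k j)
  have hη : ∀ j c', η j (linForm c') = q j * C (∑ k, c' k * U k j) := by
    intro j c'
    rw [der_linForm, map_sum, Finset.mul_sum]
    refine Finset.sum_congr rfl fun k _ => ?_
    simp only [η, mkDerivation_X, map_mul]
    ring
  refine ⟨η, fun j c' hc' => ?_, ?_⟩
  · rw [hη]
    refine Fin.cases ?_ (fun j => ?_) j
    · exact (Finset.dvd_prod_of_mem (fun c => linForm c ^ m c) hc').mul_right _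
    · by_cases hcc : c' = c
      · have h0 : ∑ k, c' k * U k j.succ = 0 := by
          have := congrFun (congrFun hPU 0) j.succ
          rw [Matrix.mul_apply, hP0, Matrix.one_apply_ne (Fin.succ_ne_zero j).symm] at this
          rw [hcc, this]
        rw [h0, map_zero, mul_zero]
        exact dvd_zero _
      · exact (Finset.dvd_prod_of_mem (fun c => linForm c ^ m c)
          (Finset.mem_erase.mpr ⟨hcc, hc'⟩)).mul_right _
  · have hmat : Matrix.of (fun i j => η i (X j)) =
        Matrix.diagonal q * (U.map C).transpose := by
      ext1 i j
      simp only [η, Matrix.of_apply, mkDerivation_X, Matrix.diagonal_mul, Matrix.transpose_apply,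
        Matrix.map_apply]
    have hsplit : linForm c ^ m c * definingPoly (A.hyps.erase c) m = definingPoly A.hyps m :=
      Finset.mul_prod_erase _ (fun c => linForm c ^ m c) hc
    rw [hmat, Matrix.det_mul, Matrix.det_transpose, (det_map_C_isUnit hPU).mul_right_dvd,
      Matrix.det_diagonal, Fin.prod_univ_succ, pow_succ', ← mul_assoc, hsplit]
    simp [q]

/-- The coefficient determinant of a basis of `D(A,m)` divides the defining polynomial. -/
lemma IsDerBasis.det_dvd {n : ℕ} {A : Arrangement K (n + 1)} {m : (Fin (n + 1) → K) → ℕ}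
    {θ : Fin (n + 1) → Der K (n + 1)} (h : IsDerBasis A m θ) (hA : A.hyps.Nonempty) :
    (Matrix.of fun i j => θ i (X j)).det ∣ definingPoly A.hyps m := by
  refine dvd_prod_pow_of_forall_dvd (N := n + 1) hA (fun c hc => prime_linForm (A.ne_zero c hc))
    (fun c hc c' hc' hne hass => ?_) fun c hc => ?_
  · obtain ⟨t, ht⟩ := exists_eq_smul_of_linForm_dvd (A.ne_zero c hc) hass.dvd
    exact A.nonparallel c hc c' hc' hne t ht
  · obtain ⟨η, hη, hdvd⟩ := exists_isLogDer_det_dvd A m hc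
    exact (h.det_dvd_det hη).trans hdvd

/-- The matrix of the values of derivations on the linear forms given by the rows of `P`. -/
noncomputable def valueMatrix {ι κ : Type*} (θ : ι → Der K ℓ) (p : κ → Fin ℓ → K) :
    Matrix ι κ (S K ℓ) :=
  Matrix.of fun i j => θ i (linForm (p j))

lemma IsDerBasis.det_valueMatrix_dvd {n : ℕ} {A : Arrangement K (n + 1)}
    {m : (Fin (n + 1) → K) → ℕ} {θ : Fin (n + 1) → Der K (n + 1)} (h : IsDerBasis A m θ)
    (hA : A.hyps.Nonempty) {P P' : Matrix (Fin (n + 1)) (Fin (n + 1)) K} (hP : P' * P = 1) :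
    (valueMatrix θ P).det ∣ definingPoly A.hyps m := by
  have hmat : valueMatrix θ P =
      (Matrix.of fun i j => θ i (X j)) * (P.map C).transpose := by
    ext1 i j
    simp only [valueMatrix, Matrix.of_apply, Matrix.mul_apply, Matrix.transpose_apply,
      Matrix.map_apply]
    rw [der_linForm]
    exact Finset.sum_congr rfl fun k _ => mul_comm _ _
  rw [hmat, Matrix.det_mul, Matrix.det_transpose, (det_map_C_isUnit hP).mul_right_dvd]
  exact h.det_dvd hA

/-! ### Coordinates on a hyperplane -/

section Restriction

variable {n : ℕ} {P P' : Matrix (Fin (n + 1)) (Fin (n + 1)) K}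

/-- The restriction of polynomials to the hyperplane given by row `0` of `P'⁻¹`, in the coordinates
given by the other rows. -/
noncomputable def resHom (P' : Matrix (Fin (n + 1)) (Fin (n + 1)) K) : S K (n + 1) →ₐ[K] S K n :=
  aeval fun i => linForm fun j => P' i j.succ

/-- The section of `resHom P⁻¹` given by the rows of `P` other than row `0`. -/
noncomputable def liftHom (P : Matrix (Fin (n + 1)) (Fin (n + 1)) K) : S K n →ₐ[K] S K (n + 1) :=
  aeval fun j => linForm (P j.succ)

lemma resHom_linForm (P' : Matrix (Fin (n + 1)) (Fin (n + 1)) K) (c : Fin (n + 1) → K) :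
    resHom P' (linForm c) = linForm fun j => ∑ i, c i * P' i j.succ := by
  have h : (fun j : Fin n => ∑ i, c i * P' i j.succ) =
      ∑ i, c i • fun j : Fin n => P' i j.succ := by
    ext j
    simp
  rw [h, linForm_sum, algHom_linForm]
  simp [resHom, algebraMap_eq]

lemma resHom_linForm_row (h : P * P' = 1) (k : Fin (n + 1)) :
    resHom P' (linForm (P k)) = linForm fun j : Fin n => if k = j.succ then 1 else 0 := by
  rw [resHom_linForm]
  congr 1
  ext j
  rw [← Matrix.mul_apply, h, Matrix.one_apply]

lemma resHom_linForm_zero (h : P * P' = 1) : resHom P' (linForm (P 0)) = 0 := by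
  rw [resHom_linForm_row h, ← linForm_zero]
  congr 1

lemma resHom_liftHom (h : P * P' = 1) (f : S K n) : resHom P' (liftHom P f) = f := by
  have : (resHom P').comp (liftHom P) = AlgHom.id K _ := by
    ext1 j
    simp only [liftHom, AlgHom.comp_apply, aeval_X, AlgHom.id_apply]
    rw [resHom_linForm_row h, ← linForm_single]
    congr 1
    ext i
    simp [Pi.single_apply, eq_comm]
  exact congrArg (fun g : S K n →ₐ[K] S K n => g f) this

lemma linForm_dvd_sub_liftHom_resHom (h : P' * P = 1) (f : S K (n + 1)) :
    linForm (P 0) ∣ f - liftHom P (resHom P' f) := by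
  rw [← Ideal.mem_span_singleton, ← Ideal.Quotient.mk_eq_mk_iff_sub_mem]
  let I := Ideal.span {linForm (P 0)}
  have key : Ideal.Quotient.mkₐ K I =
      (Ideal.Quotient.mkₐ K I).comp ((liftHom P).comp (resHom P')) := by
    ext1 i
    simp only [AlgHom.comp_apply, Ideal.Quotient.mkₐ_eq_mk]
    rw [Ideal.Quotient.mk_eq_mk_iff_sub_mem, Ideal.mem_span_singleton]
    refine ⟨C (P' i 0), ?_⟩
    have hi : Pi.single i (1 : K) = ∑ k, P' i k • P k := by
      ext j
      have := congrFun (congrFun h i) j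
      rw [Matrix.mul_apply] at this
      simp only [Finset.sum_apply, Pi.smul_apply, smul_eq_mul]
      rw [this, Matrix.one_apply, Pi.single_apply]
      simp [eq_comm]
    have hr : liftHom P (resHom P' (X i)) = ∑ j : Fin n, C (P' i j.succ) * linForm (P j.succ) := by
      simp only [resHom, aeval_X]
      rw [algHom_linForm]
      simp [liftHom, algebraMap_eq]
    have hX : (X i : S K (n + 1)) = ∑ k, C (P' i k) * linForm (P k) := by
      rw [← linForm_single, hi]
      exact linForm_sum Finset.univ (fun k => P' i k) fun k => P k
    rw [hr, hX, Fin.sum_univ_succ]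
    ring
  exact congrArg (fun g : S K (n + 1) →ₐ[K] S K (n + 1) ⧸ I => g f) key

lemma resHom_eq_zero_iff (h : P * P' = 1) {f : S K (n + 1)} :
    resHom P' f = 0 ↔ linForm (P 0) ∣ f := by
  constructor
  · intro hf
    have := linForm_dvd_sub_liftHom_resHom (mul_eq_one_comm.mp h) f
    rwa [hf, map_zero, sub_zero] at this
  · rintro ⟨g, rfl⟩
    rw [map_mul, resHom_linForm_zero h, zero_mul]

lemma constantCoeff_resHom (P' : Matrix (Fin (n + 1)) (Fin (n + 1)) K) (f : S K (n + 1)) :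
    constantCoeff (resHom P' f) = constantCoeff f := by
  have : (constantCoeff.comp (resHom P').toRingHom : S K (n + 1) →+* K) = constantCoeff := by
    refine MvPolynomial.ringHom_ext (fun r => ?_) fun i => ?_
    · simp [resHom]
    · simp [resHom, linForm]
  exact congrArg (fun g : S K (n + 1) →+* K => g f) this

lemma prime_resHom_linForm (h : P * P' = 1) {c : Fin (n + 1) → K}
    (hP : P 0 ≠ 0) (hc : ∀ t : K, c ≠ t • P 0) : Prime (resHom P' (linForm c)) := by
  have h0 : resHom P' (linForm c) ≠ 0 := by
    rw [Ne, resHom_eq_zero_iff h]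
    intro hd
    obtain ⟨t, ht⟩ := exists_eq_smul_of_linForm_dvd hP hd
    exact hc t ht
  rw [resHom_linForm] at h0 ⊢
  refine prime_linForm fun h1 => h0 ?_
  rw [h1, linForm_zero]

lemma mem_span_pair_of_associated_resHom (h : P * P' = 1) (hP : P 0 ≠ 0)
    {c c' : Fin (n + 1) → K} (hc : resHom P' (linForm c) ≠ 0)
    (hass : Associated (resHom P' (linForm c)) (resHom P' (linForm c'))) :
    c' ∈ Submodule.span K {P 0, c} := by
  have hd := hass.dvd
  rw [resHom_linForm P' c, resHom_linForm P' c'] at hd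
  obtain ⟨t, ht⟩ := exists_eq_smul_of_linForm_dvd
    (fun h1 => hc (by rw [resHom_linForm, h1, linForm_zero])) hd
  have h2 : resHom P' (linForm (c' + (-t) • c)) = 0 := by
    rw [linForm_add, linForm_smul, map_add, map_mul, resHom_linForm P' c', ht, linForm_smul,
      ← resHom_linForm, ← algebraMap_eq, ← algebraMap_eq, AlgHom.commutes, map_neg]
    ring
  rw [resHom_eq_zero_iff h] at h2
  obtain ⟨s, hs⟩ := exists_eq_smul_of_linForm_dvd hP h2
  refine Submodule.mem_span_pair.mpr ⟨s, t, ?_⟩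
  rw [← hs]
  simp

lemma dvd_det_of_dvd_mulVec {R ι : Type*} [CommRing R] [Fintype ι] [DecidableEq ι]
    {W : Matrix ι ι R} {a : ι → R} {p : R} (h : ∀ i, p ∣ (W.mulVec a) i) {j : ι}
    (hj : IsUnit (a j)) : p ∣ W.det := by
  have h1 : W.adjugate.mulVec (W.mulVec a) = W.det • a := by
    rw [Matrix.mulVec_mulVec, Matrix.adjugate_mul, Matrix.smul_mulVec, Matrix.one_mulVec]
  have h2 := congrFun h1 j
  rw [← hj.dvd_mul_right, ← smul_eq_mul, ← Pi.smul_apply, ← h2]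
  exact Finset.dvd_sum fun i _ => (h i).mul_left _

lemma resHom_der_linForm (hPP : P * P' = 1) (hPP' : P' * P = 1) {θ : Der K (n + 1)}
    (hθ : linForm (P 0) ∣ θ (linForm (P 0))) (c : Fin (n + 1) → K) :
    resHom P' (θ (linForm c)) =
      ∑ j : Fin n, C (∑ i, c i * P' i j.succ) * resHom P' (θ (linForm (P j.succ))) := by
  have hc : c = ∑ k, (∑ i, c i * P' i k) • P k := by
    have h1 : Matrix.vecMul (Matrix.vecMul c P') P = c := by
      rw [Matrix.vecMul_vecMul, hPP', Matrix.vecMul_one]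
    conv_lhs => rw [← h1]
    ext j
    simp [Matrix.vecMul, dotProduct]
  have hθc : θ (linForm c) = ∑ k, C (∑ i, c i * P' i k) * θ (linForm (P k)) := by
    conv_lhs => rw [hc]
    exact der_linForm_sum Finset.univ θ (fun k => ∑ i, c i * P' i k) fun k => P k
  rw [hθc, Fin.sum_univ_succ, map_add, map_mul, (resHom_eq_zero_iff hPP).mpr hθ,
    mul_zero, zero_add, map_sum]
  refine Finset.sum_congr rfl fun j _ => ?_
  rw [map_mul, ← algebraMap_eq, AlgHom.commutes]
  rfl

/-- Coefficient determinants of restrictions of logarithmic derivations are divisible by the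
defining polynomial of the Euler–Ziegler restriction. -/
lemma IsLocallyHeavy.resHom_definingPoly_dvd {A : Arrangement K (n + 1)}
    {m : (Fin (n + 1) → K) → ℕ} (hPP : P * P' = 1) (h : IsLocallyHeavy A m (P 0))
    (hm : 0 < m (P 0)) {η : Fin n → Der K (n + 1)} (hη : ∀ i, IsLogDer A m (η i)) :
    resHom P' (definingPoly (A.hyps.erase (P 0)) m) ∣
      ((valueMatrix η fun j : Fin n => P j.succ).map (resHom P')).det := by
  have hP0 : P 0 ≠ 0 := A.ne_zero _ h.1
  have hprime : ∀ c ∈ A.hyps.erase (P 0), Prime (resHom P' (linForm c)) := fun c hc =>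
    prime_resHom_linForm hPP hP0 (A.nonparallel _ h.1 c (Finset.mem_of_mem_erase hc)
      (Finset.ne_of_mem_erase hc).symm)
  rw [definingPoly, map_prod]
  simp only [map_pow]
  refine prod_pow_dvd_of_forall_associated hprime fun c hc => ?_
  have hcA := Finset.mem_of_mem_erase hc
  have hsub : (A.hyps.erase (P 0)).filter
      (fun c' => Associated (resHom P' (linForm c)) (resHom P' (linForm c'))) ⊆
      sameTrace A (P 0) c := fun c' hc' => by
    obtain ⟨hc'1, hc'2⟩ := Finset.mem_filter.mp hc'
    exact Finset.mem_filter.mpr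
      ⟨hc'1, mem_span_pair_of_associated_resHom hPP hP0 (hprime c hc).ne_zero hc'2⟩
  refine (Finset.prod_dvd_prod_of_subset _ _ _ hsub).trans ?_
  have hdvd : ∀ i, ∏ c' ∈ sameTrace A (P 0) c, resHom P' (linForm c') ^ m c' ∣
      resHom P' (η i (linForm c)) := by
    intro i
    obtain ⟨a, b, hab⟩ := h.exists_apply_linForm_eq (hη i) hcA (Finset.ne_of_mem_erase hc)
    rw [hab, map_add, map_mul, map_mul, resHom_linForm_zero hPP, zero_mul, add_zero, map_prod]
    simp only [map_pow]
    exact dvd_mul_right _ _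
  obtain ⟨j, hj⟩ : ∃ j : Fin n, ∑ i, c i * P' i j.succ ≠ 0 := by
    by_contra! hcon
    refine (hprime c hc).ne_zero ?_
    rw [resHom_linForm, ← linForm_zero]
    congr 1
    ext j
    exact hcon j
  refine dvd_det_of_dvd_mulVec (a := fun j : Fin n => C (∑ i, c i * P' i j.succ)) (j := j)
    (fun i => ?_) ((isUnit_iff_ne_zero.mpr hj).map C)
  convert hdvd i using 1
  rw [resHom_der_linForm hPP (mul_eq_one_comm.mp hPP)
    ((dvd_pow_self _ hm.ne').trans (hη i _ h.1))]
  simp only [Matrix.mulVec, dotProduct, valueMatrix, Matrix.map_apply, Matrix.of_apply]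
  exact Finset.sum_congr rfl fun k _ => mul_comm _ _

end Restriction

/-! ### Splitting off a derivation that is a power of the defining form -/

/-- `θ` satisfies the conditions of a logarithmic derivation at all hyperplanes except `c₀`. -/
def IsLogDerAway (A : Arrangement K ℓ) (m : (Fin ℓ → K) → ℕ) (c₀ : Fin ℓ → K)
    (θ : Der K ℓ) : Prop :=
  ∀ c ∈ A.hyps, c ≠ c₀ → linForm c ^ m c ∣ θ (linForm c)

/-- There is a homogeneous logarithmic derivation away from `c₀` sending the form of `c₀` to its
`k`-th power. -/
def HasPowDer (A : Arrangement K ℓ) (m : (Fin ℓ → K) → ℕ) (c₀ : Fin ℓ → K) (k : ℕ) : Prop :=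
  ∃ θ : Der K ℓ, IsHomogOfDeg θ k ∧ IsLogDerAway A m c₀ θ ∧ θ (linForm c₀) = linForm c₀ ^ k

/-- `θ` is a basis of the logarithmic derivations that annihilate the form of `c₀`. -/
def IsKerBasis {n : ℕ} (A : Arrangement K (n + 1)) (m : (Fin (n + 1) → K) → ℕ)
    (c₀ : Fin (n + 1) → K) (θ : Fin n → Der K (n + 1)) : Prop :=
  (∀ i, IsLogDerAway A m c₀ (θ i) ∧ θ i (linForm c₀) = 0) ∧
  (∀ η : Der K (n + 1), IsLogDerAway A m c₀ η → η (linForm c₀) = 0 →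
    ∃ f : Fin n → S K (n + 1), η = ∑ i, f i • θ i) ∧
  LinearIndependent (S K (n + 1)) θ

lemma isLogDer_iff {A : Arrangement K ℓ} {m : (Fin ℓ → K) → ℕ} {c₀ : Fin ℓ → K}
    (hc₀ : c₀ ∈ A.hyps) {θ : Der K ℓ} :
    IsLogDer A m θ ↔ linForm c₀ ^ m c₀ ∣ θ (linForm c₀) ∧ IsLogDerAway A m c₀ θ := by
  refine ⟨fun h => ⟨h c₀ hc₀, fun c hc _ => h c hc⟩, fun h c hc => ?_⟩
  by_cases hcc : c = c₀
  · rw [hcc]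
    exact h.1
  · exact h.2 c hc hcc

lemma IsLogDerAway.sub {A : Arrangement K ℓ} {m : (Fin ℓ → K) → ℕ} {c₀ : Fin ℓ → K}
    {θ η : Der K ℓ} (hθ : IsLogDerAway A m c₀ θ) (hη : IsLogDerAway A m c₀ η) :
    IsLogDerAway A m c₀ (θ - η) := fun c hc hcc => by
  rw [Derivation.sub_apply]
  exact dvd_sub (hθ c hc hcc) (hη c hc hcc)

lemma IsLogDerAway.smul {A : Arrangement K ℓ} {m : (Fin ℓ → K) → ℕ} {c₀ : Fin ℓ → K}
    {θ : Der K ℓ} (f : S K ℓ) (hθ : IsLogDerAway A m c₀ θ) :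
    IsLogDerAway A m c₀ (f • θ) := fun c hc hcc => by
  rw [Derivation.smul_apply, smul_eq_mul]
  exact (hθ c hc hcc).mul_left f

lemma IsLogDerAway.sum_smul {ι : Type*} {A : Arrangement K ℓ} {m : (Fin ℓ → K) → ℕ}
    {c₀ : Fin ℓ → K} {θ : ι → Der K ℓ} (s : Finset ι) (f : ι → S K ℓ)
    (hθ : ∀ i, IsLogDerAway A m c₀ (θ i)) :
    IsLogDerAway A m c₀ (∑ i ∈ s, f i • θ i) := fun c hc hcc => by
  rw [der_sum_smul_apply]
  exact Finset.dvd_sum fun i _ => (hθ i c hc hcc).mul_left _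

lemma isDerBasis_iff {A : Arrangement K ℓ} {m : (Fin ℓ → K) → ℕ} {θ : Fin ℓ → Der K ℓ} :
    IsDerBasis A m θ ↔ (∀ i, IsLogDer A m (θ i)) ∧
      (∀ η : Der K ℓ, IsLogDer A m η → ∃ f : Fin ℓ → S K ℓ, η = ∑ i, f i • θ i) ∧
      LinearIndependent (S K ℓ) θ := by
  constructor
  · rintro ⟨h1, h2⟩
    refine ⟨h1, fun η hη => (h2 η hη).exists, Fintype.linearIndependent_iff.mpr fun g hg => ?_⟩
    have hz := h2 0 fun c _ => by simp
    have := hz.unique hg.symm (y₂ := 0) (by simp)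
    exact congrFun this
  · rintro ⟨h1, h2, h3⟩
    refine ⟨h1, fun η hη => ?_⟩
    obtain ⟨f, hf⟩ := h2 η hη
    refine ⟨f, hf, fun g hg => ?_⟩
    exact h3.fintypeLinearCombination_injective
      (by simpa [Fintype.linearCombination_apply] using hg.symm.trans hf)

lemma IsKerBasis.isDerBasis_cons {n : ℕ} {A : Arrangement K (n + 1)}
    {m : (Fin (n + 1) → K) → ℕ} {c₀ : Fin (n + 1) → K} {θ : Fin n → Der K (n + 1)}
    (h : IsKerBasis A m c₀ θ) (hc₀ : c₀ ∈ A.hyps) {θ₀ : Der K (n + 1)}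
    (hlog : IsLogDerAway A m c₀ θ₀) (hpow : θ₀ (linForm c₀) = linForm c₀ ^ m c₀) :
    IsDerBasis A m (Fin.cons θ₀ θ) := by
  refine isDerBasis_iff.mpr ⟨?_, fun η hη => ?_, ?_⟩
  · refine Fin.cases ?_ fun i => ?_
    · exact (isLogDer_iff hc₀).mpr ⟨hpow.symm.dvd, hlog⟩
    · refine (isLogDer_iff hc₀).mpr ⟨?_, (h.1 i).1⟩
      rw [Fin.cons_succ, (h.1 i).2]
      exact dvd_zero _
  · obtain ⟨⟨f, hf⟩, hη'⟩ := (isLogDer_iff hc₀).mp hη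
    obtain ⟨g, hg⟩ := h.2.1 (η - f • θ₀) (hη'.sub (hlog.smul f)) (by
      rw [Derivation.sub_apply, Derivation.smul_apply, hf, hpow, smul_eq_mul, mul_comm, sub_self])
    refine ⟨Fin.cons f g, ?_⟩
    rw [Fin.sum_univ_succ]
    simp only [Fin.cons_zero, Fin.cons_succ]
    rw [← hg, add_sub_cancel]
  · refine Fintype.linearIndependent_iff.mpr fun g hg => ?_
    rw [Fin.sum_univ_succ] at hg
    simp only [Fin.cons_zero, Fin.cons_succ] at hg
    have h0 := congrArg (fun d : Der K (n + 1) => d (linForm c₀)) hg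
    simp only [Derivation.add_apply, Derivation.smul_apply, der_sum_smul_apply, hpow,
      (h.1 _).2, mul_zero, Finset.sum_const_zero, add_zero, smul_eq_mul,
      Derivation.zero_apply] at h0
    have hg0 : g 0 = 0 :=
      (mul_eq_zero.mp h0).resolve_right (pow_ne_zero _ (linForm_ne_zero (A.ne_zero _ hc₀)))
    rw [hg0, zero_smul, zero_add] at hg
    have hgs := Fintype.linearIndependent_iff.mp h.2.2 (fun i => g i.succ) hg
    exact Fin.cases hg0 hgs

lemma IsKerBasis.isFree {n : ℕ} {A : Arrangement K (n + 1)}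
    {m : (Fin (n + 1) → K) → ℕ} {c₀ : Fin (n + 1) → K} {θ : Fin n → Der K (n + 1)}
    (h : IsKerBasis A m c₀ θ) (hc₀ : c₀ ∈ A.hyps) {d : Fin n → ℕ}
    (hd : ∀ i, IsHomogOfDeg (θ i) (d i)) (hpow : HasPowDer A m c₀ (m c₀)) : IsFree A m := by
  obtain ⟨θ₀, hhom, hlog, hval⟩ := hpow
  exact ⟨Fin.cons (m c₀) d, Fin.cons θ₀ θ, Fin.cases hhom hd, h.isDerBasis_cons hc₀ hlog hval⟩

lemma definingPoly_eq_mul_erase {s : Finset (Fin ℓ → K)} {c : Fin ℓ → K} (hc : c ∈ s)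
    (m : (Fin ℓ → K) → ℕ) :
    definingPoly s m = linForm c ^ m c * definingPoly (s.erase c) m :=
  (Finset.mul_prod_erase s (fun c => linForm c ^ m c) hc).symm

lemma resHom_definingPoly_ne_zero {n : ℕ} {A : Arrangement K (n + 1)}
    {P P' : Matrix (Fin (n + 1)) (Fin (n + 1)) K} (hPP : P * P' = 1) (h : P 0 ∈ A.hyps)
    (m : (Fin (n + 1) → K) → ℕ) : resHom P' (definingPoly (A.hyps.erase (P 0)) m) ≠ 0 := by
  rw [definingPoly, map_prod]
  refine Finset.prod_ne_zero_iff.mpr fun c hc => ?_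
  rw [map_pow]
  exact pow_ne_zero _ (prime_resHom_linForm hPP (A.ne_zero _ h) (A.nonparallel _ h c
    (Finset.mem_of_mem_erase hc) (Finset.ne_of_mem_erase hc).symm)).ne_zero

/-- In a basis of `D(A,m)`, some derivation sends the form of a locally heavy hyperplane to a power
times a polynomial not vanishing at the origin. -/
lemma IsDerBasis.exists_constantCoeff_ne_zero {n : ℕ} {A : Arrangement K (n + 1)}
    {m : (Fin (n + 1) → K) → ℕ} {c₀ : Fin (n + 1) → K} {θ : Fin (n + 1) → Der K (n + 1)}
    (hθ : IsDerBasis A m θ) (h : IsLocallyHeavy A m c₀) (hm : 0 < m c₀)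
    {f : Fin (n + 1) → S K (n + 1)}
    (hf : ∀ i, θ i (linForm c₀) = linForm c₀ ^ m c₀ * f i) :
    ∃ i, constantCoeff (f i) ≠ 0 := by
  obtain ⟨P, P', rfl, hPP, hPP'⟩ := exists_invertible_row (A.ne_zero _ h.1)
  by_contra! hcon
  let minor : Fin (n + 1) → S K (n + 1) := fun i =>
    (valueMatrix (fun j => θ (i.succAbove j)) fun j : Fin n => P j.succ).det
  have hdet : (valueMatrix θ P).det =
      linForm (P 0) ^ m (P 0) * ∑ i : Fin (n + 1), (-1) ^ (i : ℕ) * f i * minor i := by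
    rw [Matrix.det_succ_column_zero, Finset.mul_sum]
    refine Finset.sum_congr rfl fun i _ => ?_
    have h1 : valueMatrix θ P i 0 = linForm (P 0) ^ m (P 0) * f i := hf i
    have h2 : ((valueMatrix θ P).submatrix i.succAbove Fin.succ).det = minor i := rfl
    rw [h1, h2]
    ring
  have hdvd := hθ.det_valueMatrix_dvd ⟨_, h.1⟩ hPP'
  rw [hdet, definingPoly_eq_mul_erase h.1, mul_dvd_mul_iff_left
    (pow_ne_zero _ (linForm_ne_zero (A.ne_zero _ h.1)))] at hdvd
  obtain ⟨g, hg⟩ := hdvd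
  have hminor : ∀ i, resHom P' (definingPoly (A.hyps.erase (P 0)) m) ∣ resHom P' (minor i) := by
    intro i
    have h1 := h.resHom_definingPoly_dvd hPP hm (η := fun j => θ (i.succAbove j))
      fun j => hθ.1 _
    have h2 := AlgHom.map_det (resHom P')
      (valueMatrix (fun j => θ (i.succAbove j)) fun j : Fin n => P j.succ)
    rw [AlgHom.mapMatrix_apply] at h2
    rwa [← h2] at h1
  choose e he using hminor
  have hQ := congrArg (resHom P') hg
  have hE : resHom P' (∑ i : Fin (n + 1), (-1) ^ (i : ℕ) * f i * minor i) =
      resHom P' (definingPoly (A.hyps.erase (P 0)) m) *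
        ∑ i : Fin (n + 1), (-1) ^ (i : ℕ) * resHom P' (f i) * e i := by
    rw [map_sum, Finset.mul_sum]
    refine Finset.sum_congr rfl fun i _ => ?_
    rw [map_mul, map_mul, map_pow, map_neg, map_one, he]
    ring
  rw [map_mul, hE, mul_assoc] at hQ
  have hone := mul_left_cancel₀ (resHom_definingPoly_ne_zero hPP h.1 m)
    ((mul_one _).trans hQ)
  have hcc := congrArg constantCoeff hone
  rw [map_one, map_mul, map_sum, Finset.sum_eq_zero, zero_mul] at hcc
  · exact one_ne_zero hcc
  · intro i _
    rw [map_mul, map_mul, constantCoeff_resHom, hcon i, mul_zero, zero_mul]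

lemma IsHomogOfDeg.smul {θ : Der K ℓ} {f : S K ℓ} {d e : ℕ} (hθ : IsHomogOfDeg θ d)
    (hf : f.IsHomogeneous e) : IsHomogOfDeg (f • θ) (e + d) := fun c => by
  rw [Derivation.smul_apply, smul_eq_mul]
  exact hf.mul (hθ c)

lemma IsHomogOfDeg.sub {θ η : Der K ℓ} {d : ℕ} (hθ : IsHomogOfDeg θ d)
    (hη : IsHomogOfDeg η d) : IsHomogOfDeg (θ - η) d := fun c => by
  rw [Derivation.sub_apply]
  exact (hθ c).sub (hη c)

/-- A homogeneous basis of `D(A,m)` with `H₀` locally heavy can be split at `H₀`. -/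
lemma IsLocallyHeavy.split_of_isFree {n : ℕ} {A : Arrangement K (n + 1)}
    {m : (Fin (n + 1) → K) → ℕ} {c₀ : Fin (n + 1) → K}
    (h : IsLocallyHeavy A m c₀) (hm : 0 < m c₀) (hfree : IsFree A m) :
    HasPowDer A m c₀ (m c₀) ∧ ∃ d : Fin n → ℕ, ∃ θ : Fin n → Der K (n + 1),
      (∀ i, IsHomogOfDeg (θ i) (d i)) ∧ IsKerBasis A m c₀ θ := by
  obtain ⟨d, θ, hd, hθ⟩ := hfree
  have hlog := fun i => (isLogDer_iff h.1).mp (hθ.1 i)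
  choose f hf using fun i => (hlog i).1
  have hα : linForm c₀ ^ m c₀ ≠ 0 := pow_ne_zero _ (linForm_ne_zero (A.ne_zero _ h.1))
  have hαhom : (linForm c₀ ^ m c₀).IsHomogeneous (m c₀) := by
    simpa using (isHomogeneous_linForm c₀).pow (m c₀)
  have hfhom : ∀ i, f i ≠ 0 → m c₀ ≤ d i ∧ (f i).IsHomogeneous (d i - m c₀) := fun i hi =>
    isHomogeneous_of_mul_left hαhom hα hi (by rw [← hf i]; exact hd i c₀)
  obtain ⟨i₀, hi₀⟩ := hθ.exists_constantCoeff_ne_zero h hm hf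
  set u := constantCoeff (f i₀) with hu
  have hfi₀ : f i₀ ≠ 0 := by
    intro h0
    rw [h0, map_zero] at hu
    exact hi₀ hu
  have hdi₀ : d i₀ = m c₀ := by
    have h1 := (hfhom i₀ hfi₀).2 (d := 0) (by rw [← constantCoeff_eq, ← hu]; exact hi₀)
    have h2 := (hfhom i₀ hfi₀).1
    simp at h1
    omega
  have hfu : f i₀ = C u := by
    have h1 := homogeneousComponent_eq_self (hfhom i₀ hfi₀).2
    rw [hdi₀, Nat.sub_self, homogeneousComponent_zero] at h1
    rw [hu, constantCoeff_eq]
    exact h1.symm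
  let θ₀ : Der K (n + 1) := (C u⁻¹ : S K (n + 1)) • θ i₀
  have hθ₀hom : IsHomogOfDeg θ₀ (m c₀) := by
    simpa [hdi₀] using (hd i₀).smul (isHomogeneous_C _ u⁻¹)
  have hθ₀log : IsLogDerAway A m c₀ θ₀ := (hlog i₀).2.smul _
  have hθ₀val : θ₀ (linForm c₀) = linForm c₀ ^ m c₀ := by
    simp only [θ₀, Derivation.smul_apply, smul_eq_mul]
    rw [hf i₀, hfu, mul_left_comm, ← map_mul, inv_mul_cancel₀ hi₀, map_one, mul_one]
  refine ⟨⟨θ₀, hθ₀hom, hθ₀log, hθ₀val⟩, fun j => d (i₀.succAbove j),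
    fun j => θ (i₀.succAbove j) - f (i₀.succAbove j) • θ₀, fun j => ?_, ?_, ?_, ?_⟩
  · refine (hd _).sub ?_
    by_cases hfj : f (i₀.succAbove j) = 0
    · intro c
      simpa [hfj] using isHomogeneous_zero _ _ _
    · have h1 := hθ₀hom.smul (hfhom _ hfj).2
      rwa [Nat.sub_add_cancel (hfhom _ hfj).1] at h1
  · refine fun j => ⟨(hlog _).2.sub (hθ₀log.smul _), ?_⟩
    rw [Derivation.sub_apply, Derivation.smul_apply, hf, hθ₀val, smul_eq_mul, mul_comm, sub_self]
  · intro η hη hη0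
    obtain ⟨g, hg⟩ := (isDerBasis_iff.mp hθ).2.1 η
      ((isLogDer_iff h.1).mpr ⟨by rw [hη0]; exact dvd_zero _, hη⟩)
    have h0 : ∑ i, g i * f i = 0 := by
      have h1 := congrArg (fun d : Der K (n + 1) => d (linForm c₀)) hg
      simp only [hη0, der_sum_smul_apply, hf] at h1
      refine (mul_eq_zero.mp (?_ : linForm c₀ ^ m c₀ * ∑ i, g i * f i = 0)).resolve_left hα
      rw [h1, Finset.mul_sum]
      exact Finset.sum_congr rfl fun i _ => by ring
    refine ⟨fun j => g (i₀.succAbove j), ?_⟩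
    rw [Fin.sum_univ_succAbove _ i₀] at hg h0
    have h2 : ∑ j, g (i₀.succAbove j) * f (i₀.succAbove j) = -(g i₀ * C u) := by
      rw [← hfu]
      linear_combination h0
    simp only [smul_sub, smul_smul, Finset.sum_sub_distrib]
    rw [← Finset.sum_smul, h2, hg, neg_smul, sub_neg_eq_add, add_comm (g i₀ • θ i₀)]
    congr 1
    simp only [θ₀]
    rw [smul_smul, mul_assoc, ← map_mul, mul_inv_cancel₀ hi₀, map_one, mul_one]
  · refine Fintype.linearIndependent_iff.mpr fun g hg => ?_
    have hli := Fintype.linearIndependent_iff.mp (isDerBasis_iff.mp hθ).2.2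
      (i₀.insertNth (-(∑ j, g j * f (i₀.succAbove j)) * C u⁻¹) g)
    intro j
    have h1 := hli (by
      rw [Fin.sum_univ_succAbove _ i₀]
      simp only [Fin.insertNth_apply_same, Fin.insertNth_apply_succAbove]
      simp only [smul_sub, smul_smul, Finset.sum_sub_distrib] at hg
      rw [← Finset.sum_smul] at hg
      rw [← hg, ← smul_smul, neg_smul, neg_add_eq_sub]) (i₀.succAbove j)
    simpa using h1

/-! ### Changing the multiplicity of the locally heavy hyperplane -/

lemma HasPowDer.succ {A : Arrangement K ℓ} {m : (Fin ℓ → K) → ℕ} {c₀ : Fin ℓ → K} {k : ℕ}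
    (h : HasPowDer A m c₀ k) : HasPowDer A m c₀ (k + 1) := by
  obtain ⟨θ, hhom, hlog, hval⟩ := h
  refine ⟨linForm c₀ • θ, ?_, hlog.smul _, ?_⟩
  · rw [add_comm]
    exact hhom.smul (isHomogeneous_linForm c₀)
  · rw [Derivation.smul_apply, smul_eq_mul, hval, pow_succ']

/-- The condition on the homogeneous degree in `HasPowDer` is automatic. -/
lemma hasPowDer_of_isLogDerAway {A : Arrangement K ℓ} {m : (Fin ℓ → K) → ℕ} {c₀ : Fin ℓ → K}
    {k : ℕ} {θ : Der K ℓ} (hlog : IsLogDerAway A m c₀ θ)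
    (hval : θ (linForm c₀) = linForm c₀ ^ k) : HasPowDer A m c₀ k := by
  have hpow : ∀ (c : Fin ℓ → K) (j : ℕ), (linForm c ^ j).IsHomogeneous j := fun c j => by
    simpa using (isHomogeneous_linForm c).pow j
  have key : ∀ c, mkDerivation K (fun i => homogeneousComponent k (θ (X i))) (linForm c) =
      homogeneousComponent k (θ (linForm c)) := fun c => by
    rw [der_linForm, der_linForm, map_sum]
    refine Finset.sum_congr rfl fun i _ => ?_
    rw [mkDerivation_X, homogeneousComponent_C_mul]
  refine ⟨mkDerivation K fun i => homogeneousComponent k (θ (X i)), fun c => ?_,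
    fun c hc hcc => ?_, ?_⟩
  · rw [key]
    exact homogeneousComponent_isHomogeneous _ _
  · rw [key]
    exact dvd_homogeneousComponent (hpow c _) (hlog c hc hcc) k
  · rw [key, hval, homogeneousComponent_eq_self (hpow c₀ k)]

lemma exists_vecMul_eq_of_dvd_det_updateRow {R ι : Type*} [CommRing R] [IsDomain R] [Fintype ι]
    [DecidableEq ι] {W : Matrix ι ι R} {w : ι → R} {q : R} (hq : q ≠ 0) (hW : W.det ∣ q)
    (h : ∀ i, q ∣ (W.updateRow i w).det) : ∃ c : ι → R, Matrix.vecMul c W = w := by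
  choose e he using h
  obtain ⟨g, rfl⟩ := hW
  refine ⟨g • e, ?_⟩
  have h1 := Matrix.mulVec_cramer W.transpose w
  have h2 : Matrix.cramer W.transpose w = W.det • g • e := by
    ext i
    rw [Matrix.cramer_transpose_apply, he]
    simp [mul_assoc]
  rw [h2, Matrix.mulVec_transpose, Matrix.det_transpose, Matrix.smul_vecMul] at h1
  exact smul_right_injective _ (left_ne_zero_of_mul hq) h1

/-- A derivation all of whose values on linear forms are divisible by the form of `c₀` can be
divided by it. -/
lemma exists_isLogDerAway_smul_eq {A : Arrangement K ℓ} {m : (Fin ℓ → K) → ℕ} {c₀ : Fin ℓ → K}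
    (hc₀ : c₀ ∈ A.hyps) {θ : Der K ℓ} (hlog : IsLogDerAway A m c₀ θ)
    (h : ∀ c, linForm c₀ ∣ θ (linForm c)) :
    ∃ η : Der K ℓ, IsLogDerAway A m c₀ η ∧ linForm c₀ • η = θ := by
  choose v hv using fun i => h (Pi.single i 1)
  have heq : linForm c₀ • mkDerivation K v = θ := by
    refine MvPolynomial.derivation_ext fun i => ?_
    rw [Derivation.smul_apply, mkDerivation_X, smul_eq_mul, ← hv, linForm_single]
  refine ⟨mkDerivation K v, fun c hc hcc => ?_, heq⟩
  have h1 := hlog c hc hcc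
  rw [← heq, Derivation.smul_apply, smul_eq_mul] at h1
  have h2 := A.isRelPrime_linForm_pow hc hc₀ hcc (m c) 1
  rw [pow_one] at h2
  exact h2.dvd_of_dvd_mul_left h1

lemma IsKerBasis.det_valueMatrix_dvd {n : ℕ} {A : Arrangement K (n + 1)}
    {m : (Fin (n + 1) → K) → ℕ} {P P' : Matrix (Fin (n + 1)) (Fin (n + 1)) K}
    {θ : Fin n → Der K (n + 1)} (hθ : IsKerBasis A m (P 0) θ) (hP : P 0 ∈ A.hyps)
    (hPP' : P' * P = 1) (hpow : HasPowDer A m (P 0) (m (P 0))) :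
    (valueMatrix θ fun j : Fin n => P j.succ).det ∣ definingPoly (A.hyps.erase (P 0)) m := by
  obtain ⟨θ₀, -, hlog, hval⟩ := hpow
  have hdvd := (hθ.isDerBasis_cons hP hlog hval).det_valueMatrix_dvd ⟨_, hP⟩ hPP'
  have hdet : (valueMatrix (Fin.cons θ₀ θ : Fin (n + 1) → Der K (n + 1)) P).det =
      linForm (P 0) ^ m (P 0) * (valueMatrix θ fun j : Fin n => P j.succ).det := by
    rw [Matrix.det_succ_column_zero, Fin.sum_univ_succ, Finset.sum_eq_zero, add_zero]
    · have h1 : valueMatrix (Fin.cons θ₀ θ : Fin (n + 1) → Der K (n + 1)) P 0 0 =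
          linForm (P 0) ^ m (P 0) := hval
      have h2 : (valueMatrix (Fin.cons θ₀ θ : Fin (n + 1) → Der K (n + 1)) P).submatrix
          (Fin.succAbove 0) Fin.succ = valueMatrix θ fun j : Fin n => P j.succ := rfl
      rw [h1, h2]
      simp
    · intro i _
      have h1 : valueMatrix (Fin.cons θ₀ θ : Fin (n + 1) → Der K (n + 1)) P i.succ 0 = 0 :=
        (hθ.1 i).2
      rw [h1, mul_zero, zero_mul]
  rwa [hdet, definingPoly_eq_mul_erase hP, mul_dvd_mul_iff_left
    (pow_ne_zero _ (linForm_ne_zero (A.ne_zero _ hP)))] at hdvd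

lemma IsKerBasis.hasPowDer_of_succ {n : ℕ} {A : Arrangement K (n + 1)}
    {m : (Fin (n + 1) → K) → ℕ} {c₀ : Fin (n + 1) → K} {θ : Fin n → Der K (n + 1)}
    (hθ : IsKerBasis A m c₀ θ) (h : IsLocallyHeavy A m c₀) {k : ℕ} (hk : m c₀ = k + 1)
    (hpow : HasPowDer A m c₀ (k + 1)) : HasPowDer A m c₀ k := by
  obtain ⟨P, P', rfl, hPP, hPP'⟩ := exists_invertible_row (A.ne_zero _ h.1)
  have hdvd := hθ.det_valueMatrix_dvd h.1 hPP' (hk ▸ hpow)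
  obtain ⟨θ₀, -, hlog, hval⟩ := hpow
  have hθlog : ∀ i, IsLogDer A m (θ i) := fun i =>
    (isLogDer_iff h.1).mpr ⟨by rw [(hθ.1 i).2]; exact dvd_zero _, (hθ.1 i).1⟩
  have hθ₀log : IsLogDer A m θ₀ :=
    (isLogDer_iff h.1).mpr ⟨by rw [hk, hval], hlog⟩
  let W := (valueMatrix θ fun j : Fin n => P j.succ).map (resHom P')
  have hW : W.det ∣ resHom P' (definingPoly (A.hyps.erase (P 0)) m) := by
    have h1 := map_dvd (resHom P') hdvd
    rwa [AlgHom.map_det, AlgHom.mapMatrix_apply] at h1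
  obtain ⟨c, hc⟩ := exists_vecMul_eq_of_dvd_det_updateRow
    (w := fun j : Fin n => resHom P' (θ₀ (linForm (P j.succ))))
    (resHom_definingPoly_ne_zero hPP h.1 m) hW fun i => by
      have h1 := h.resHom_definingPoly_dvd hPP (by omega) (η := Function.update θ i θ₀)
        fun j => by
          by_cases hj : j = i
          · rw [hj, Function.update_self]
            exact hθ₀log
          · rw [Function.update_of_ne hj]
            exact hθlog j
      convert h1 using 2
      ext1 a b
      by_cases ha : a = i
      · subst ha
        simp [valueMatrix]
      · simp [W, valueMatrix, ha]
  let η : Der K (n + 1) := θ₀ - ∑ i, liftHom P (c i) • θ i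
  have hηlog : IsLogDerAway A m (P 0) η :=
    hlog.sub (IsLogDerAway.sum_smul _ _ fun i => (hθ.1 i).1)
  have hηval : η (linForm (P 0)) = linForm (P 0) ^ (k + 1) := by
    simp only [η, Derivation.sub_apply, der_sum_smul_apply, (hθ.1 _).2, mul_zero,
      Finset.sum_const_zero, sub_zero, hval]
  have hηres : ∀ j : Fin n, resHom P' (η (linForm (P j.succ))) = 0 := fun j => by
    have h1 := congrFun hc j
    simp only [Matrix.vecMul, dotProduct, W, valueMatrix, Matrix.map_apply, Matrix.of_apply] at h1
    simp only [η, Derivation.sub_apply, der_sum_smul_apply, map_sub, map_sum, map_mul,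
      resHom_liftHom hPP]
    rw [h1, sub_self]
  obtain ⟨ξ, hξlog, hξ⟩ := exists_isLogDerAway_smul_eq h.1 hηlog fun c => by
    rw [← resHom_eq_zero_iff hPP, resHom_der_linForm hPP hPP'
      (by rw [hηval]; exact dvd_pow_self _ k.succ_ne_zero)]
    exact Finset.sum_eq_zero fun j _ => by rw [hηres, mul_zero]
  refine hasPowDer_of_isLogDerAway hξlog (mul_left_cancel₀
    (linForm_ne_zero (A.ne_zero _ h.1)) ?_)
  rw [← pow_succ', ← hηval, ← hξ, Derivation.smul_apply, smul_eq_mul]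

lemma isLogDerAway_congr {A : Arrangement K ℓ} {m m' : (Fin ℓ → K) → ℕ} {c₀ : Fin ℓ → K}
    (h : ∀ c ∈ A.hyps, c ≠ c₀ → m' c = m c) : IsLogDerAway A m' c₀ = IsLogDerAway A m c₀ := by
  ext θ
  exact forall₃_congr fun c hc hcc => by rw [h c hc hcc]

lemma hasPowDer_congr {A : Arrangement K ℓ} {m m' : (Fin ℓ → K) → ℕ} {c₀ : Fin ℓ → K}
    (h : ∀ c ∈ A.hyps, c ≠ c₀ → m' c = m c) : HasPowDer A m' c₀ = HasPowDer A m c₀ := by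
  ext k
  simp only [HasPowDer, isLogDerAway_congr h]

lemma isKerBasis_congr {n : ℕ} {A : Arrangement K (n + 1)} {m m' : (Fin (n + 1) → K) → ℕ}
    {c₀ : Fin (n + 1) → K} (h : ∀ c ∈ A.hyps, c ≠ c₀ → m' c = m c) :
    IsKerBasis A m' c₀ = IsKerBasis A m c₀ := by
  ext θ
  simp only [IsKerBasis, isLogDerAway_congr h]

lemma IsLocallyHeavy.mono {A : Arrangement K ℓ} {m m' : (Fin ℓ → K) → ℕ} {c₀ : Fin ℓ → K}
    (h : IsLocallyHeavy A m c₀) (hagree : ∀ c ∈ A.hyps, c ≠ c₀ → m' c = m c)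
    (hle : m c₀ ≤ m' c₀) : IsLocallyHeavy A m' c₀ := by
  refine ⟨h.1, fun U hU hcU hcard => ?_⟩
  refine (Finset.sum_congr rfl fun c hc => ?_).trans_le ((h.2 U hU hcU hcard).trans hle)
  exact hagree c (Finset.mem_filter.mp (Finset.mem_of_mem_erase hc)).1
    (Finset.ne_of_mem_erase hc)

lemma IsKerBasis.hasPowDer_of_add {n : ℕ} {A : Arrangement K (n + 1)}
    {m : (Fin (n + 1) → K) → ℕ} {c₀ : Fin (n + 1) → K} {θ : Fin n → Der K (n + 1)}
    (hθ : IsKerBasis A m c₀ θ) (h : IsLocallyHeavy A m c₀) (j : ℕ)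
    (hpow : HasPowDer A m c₀ (m c₀ + j)) : HasPowDer A m c₀ (m c₀) := by
  induction j with
  | zero => exact hpow
  | succ j ih =>
    refine ih ?_
    let m₁ := Function.update m c₀ (m c₀ + j + 1)
    have hagree : ∀ c ∈ A.hyps, c ≠ c₀ → m₁ c = m c := fun c _ hc => Function.update_of_ne hc _ _
    have hval : m₁ c₀ = m c₀ + j + 1 := Function.update_self ..
    rw [← isKerBasis_congr hagree] at hθ
    rw [← hasPowDer_congr hagree] at hpow ⊢
    exact hθ.hasPowDer_of_succ (h.mono hagree (by omega)) hval hpow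

lemma IsLocallyHeavy.isFree_of_isFree {n : ℕ} {A : Arrangement K (n + 1)}
    {m m' : (Fin (n + 1) → K) → ℕ} {c₀ : Fin (n + 1) → K} (hm : 0 < m c₀)
    (h : IsLocallyHeavy A m c₀) (h' : IsLocallyHeavy A m' c₀)
    (hagree : ∀ c ∈ A.hyps, c ≠ c₀ → m' c = m c) (hfree : IsFree A m) : IsFree A m' := by
  obtain ⟨hpow, d, θ, hd, hθ⟩ := h.split_of_isFree hm hfree
  rw [← isKerBasis_congr hagree] at hθ
  rw [← hasPowDer_congr hagree] at hpow
  refine hθ.isFree h.1 hd ?_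
  rcases le_total (m c₀) (m' c₀) with hle | hle
  · exact Nat.le_induction hpow (fun k _ hk => hk.succ) _ hle
  · exact hθ.hasPowDer_of_add h' (m c₀ - m' c₀) (by rwa [Nat.add_sub_cancel' hle])

theorem stmt11 (A : Arrangement K ℓ) (m m' : (Fin ℓ → K) → ℕ)
    (hm : ∀ c ∈ A.hyps, 0 < m c) (hm' : ∀ c ∈ A.hyps, 0 < m' c)
    (c₀ : Fin ℓ → K) (h1 : IsLocallyHeavy A m c₀) (h2 : IsLocallyHeavy A m' c₀)
    (hagree : ∀ c ∈ A.hyps, c ≠ c₀ → m' c = m c) :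
    IsFree A m ↔ IsFree A m' := by
  cases ℓ with
  | zero => exact absurd (Subsingleton.elim c₀ 0) (A.ne_zero c₀ h1.1)
  | succ n =>
    exact ⟨IsLocallyHeavy.isFree_of_isFree (hm c₀ h1.1) h1 h2 hagree,
      IsLocallyHeavy.isFree_of_isFree (hm' c₀ h2.1) h2 h1
        fun c hc hcc => (hagree c hc hcc).symm⟩

end ArrPaper
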